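/- Let P be a PPIP and S, T ∈ Csub(P) such that S ∪ T is consistent. Then the join S ∨ T exists in Csub(P) (ordered by inclusion) and is given by S ∨ T = S ∪ T ∪ {r ∈ P : there exist p ∈ S and q ∈ T such that C(p,q,r) holds}. -/

import Mathlib

/-- A PPIP: a poset (given by `le`) with a symmetric inconsistency relation `ic` and a
symmetric collinearity relation `C` satisfying (IC1), (IC2), (CT1), (CT2), Regularity,
weak Triangle, (CC1) and (CC2). -/
structure IsPPIP (P : Type*) (le : P → P → Prop) (ic : P → P → Prop)
    (C : P → P → P → Prop) : Prop where
  le_refl : ∀ p, le p p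
  le_trans : ∀ p q r, le p q → le q r → le p r
  le_antisymm : ∀ p q, le p q → le q p → p = q
  ic_symm : ∀ p q, ic p q → ic q p
  c_symm_left : ∀ p q r, C p q r → C q p r
  c_symm_right : ∀ p q r, C p q r → C p r q
  ic1 : ∀ p q, ic p q → ¬ ∃ w, le p w ∧ le q w
  ic2 : ∀ p q p' q', ic p q → le p p' → le q q' → ic p' q'
  ct1 : ∀ p q r, C p q r →
    (¬ le p q ∧ ¬ le q p) ∧ (¬ le q r ∧ ¬ le r q) ∧ (¬ le r p ∧ ¬ le p r)
  ct2 : ∀ p q r w, C p q r → le p w → le q w → le r w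
  regularity : ∀ p q r r', C p q r → le r' r → ¬ le r' p → ¬ le r' q →
    ∃ p' q', le p' p ∧ le q' q ∧ C p' q' r'
  weak_triangle : ∀ a b c p q, C a c p → C b c q →
    (∀ u v, u ∈ ({a, b, c, p, q} : Set P) → v ∈ ({a, b, c, p, q} : Set P) → ¬ ic u v) →
    ((∃ x, C a b x ∧ C p q x ∧
        List.Pairwise (fun u v => ¬ le u v ∧ ¬ le v u) [a, b, c, p, q, x] ∧
        (∀ u v w, u ∈ ({a, b, c, p, q, x} : Set P) → v ∈ ({a, b, c, p, q, x} : Set P) →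
          w ∈ ({a, b, c, p, q, x} : Set P) → C u v w →
          ({u, v, w} : Multiset P) = {a, c, p} ∨ ({u, v, w} : Multiset P) = {b, c, q} ∨
          ({u, v, w} : Multiset P) = {a, b, x} ∨ ({u, v, w} : Multiset P) = {p, q, x})) ∨
      (∃ a', le a' a ∧ C b q a') ∨
      C b q p ∨
      (∃ a' p', le a' a ∧ le p' p ∧ C q a' p') ∨
      (le q a ∨ le q p))
  cc1 : ∀ p q r, C p q r → ¬ ic p q ∧ ¬ ic q r ∧ ¬ ic r p
  cc2 : ∀ p q r x, C p q r →
    ((ic x p ∧ ic x q) ∨ (ic x q ∧ ic x r) ∨ (ic x p ∧ ic x r)) ∨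
    (¬ ic x p ∧ ¬ ic x q ∧ ¬ ic x r)
/-- A consistent subspace: a downward-closed subset, no two of whose elements are
inconsistent, that is closed under the collinearity relation. -/
def IsCSub {P : Type*} (le : P → P → Prop) (ic : P → P → Prop)
    (C : P → P → P → Prop) (X : Set P) : Prop :=
  (∀ p q, le p q → q ∈ X → p ∈ X) ∧
  (∀ p q, p ∈ X → q ∈ X → ¬ ic p q) ∧
  (∀ p q r, p ∈ X → q ∈ X → C p q r → r ∈ X)

/-!
Write `J = S ∪ T ∪ L(S, T)`, where `L(A, B)` is the set of third points of the lines through a point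
of `A` and a point of `B`. Regularity makes `J` downward closed and (CC2) makes it consistent, so
the content is `L(J, J) ⊆ J`. Let `B ⊆ J` satisfy `L(S, B) ⊆ B` and `L(T, B) ⊆ J`. The weak
Triangle axiom, applied to a line through `b ∈ B` and `u ∈ L(S, T)`, and to the line through `s ∈ S`
and `t ∈ T` that contains `u`, then yields `L(B, J) ⊆ J`. For `B = S` this is `L(S, J) ⊆ J`, and
`L(T, J) ⊆ J` by symmetry; these two inclusions are what the case `B = J` needs.
-/

section Definitions

variable {P : Type*}

/-- Downward closed subsets for the order `le`; `IsLowerSet` does not apply because the order of a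
PPIP is a bare relation and not an instance. -/
def IsDownClosed (le : P → P → Prop) (X : Set P) : Prop :=
  ∀ p q, le p q → q ∈ X → p ∈ X

/-- Consistent subsets for the inconsistency relation `ic`: no two elements, equal or not, are
related by `ic`. -/
def IsConsistent (ic : P → P → Prop) (X : Set P) : Prop :=
  ∀ p q, p ∈ X → q ∈ X → ¬ ic p q

/-- The third points of the collinear triples with first point in `A` and second point in `B`, from
which the join of two consistent subspaces is built. -/
def thirdPoints (C : P → P → P → Prop) (A B : Set P) : Set P :=
  {r | ∃ p ∈ A, ∃ q ∈ B, C p q r}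

/-- The set `S ∪ T ∪ {r | ∃ p ∈ S, ∃ q ∈ T, C p q r}`, which is the candidate for the join of `S`
and `T` in `Csub(P)`. -/
def lineJoin (C : P → P → P → Prop) (S T : Set P) : Set P :=
  S ∪ T ∪ thirdPoints C S T

end Definitions

section Subsets

variable {P : Type*} {le ic : P → P → Prop} {C : P → P → P → Prop} {S T X Y : Set P}

theorem IsConsistent.mono (hY : IsConsistent ic Y) (hXY : X ⊆ Y) : IsConsistent ic X :=
  fun p q hp hq => hY p q (hXY hp) (hXY hq)

theorem thirdPoints_mono (hS : S ⊆ X) (hT : T ⊆ Y) : thirdPoints C S T ⊆ thirdPoints C X Y :=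
  fun _ ⟨p, hp, q, hq, hC⟩ => ⟨p, hS hp, q, hT hq, hC⟩

theorem isCSub_iff :
    IsCSub le ic C X ↔ IsDownClosed le X ∧ IsConsistent ic X ∧ thirdPoints C X X ⊆ X :=
  and_congr_right fun _ => and_congr_right fun _ =>
    ⟨fun hX r ⟨p, hp, q, hq, hC⟩ => hX p q r hp hq hC,
      fun hX p q _ hp hq hC => hX ⟨p, hp, q, hq, hC⟩⟩

theorem subset_lineJoin_left : S ⊆ lineJoin C S T :=
  fun _ hs => .inl (.inl hs)

theorem subset_lineJoin_right : T ⊆ lineJoin C S T :=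
  fun _ ht => .inl (.inr ht)

theorem thirdPoints_subset_lineJoin : thirdPoints C S T ⊆ lineJoin C S T :=
  Set.subset_union_right

theorem lineJoin_subset (hS : S ⊆ X) (hT : T ⊆ X) (hX : thirdPoints C X X ⊆ X) :
    lineJoin C S T ⊆ X :=
  Set.union_subset (Set.union_subset hS hT) ((thirdPoints_mono hS hT).trans hX)

end Subsets

namespace IsPPIP

variable {P : Type*} {le ic : P → P → Prop} {C : P → P → P → Prop} {S T B : Set P}

theorem c_rotate (h : IsPPIP P le ic C) {p q r : P} (hC : C p q r) : C r p q :=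
  h.c_symm_left p r q (h.c_symm_right p q r hC)

theorem thirdPoints_comm (h : IsPPIP P le ic C) (S T : Set P) :
    thirdPoints C S T = thirdPoints C T S := by
  have swap (A B : Set P) : thirdPoints C A B ⊆ thirdPoints C B A :=
    fun r ⟨p, hp, q, hq, hC⟩ => ⟨q, hq, p, hp, h.c_symm_left p q r hC⟩
  exact (swap S T).antisymm (swap T S)

theorem lineJoin_comm (h : IsPPIP P le ic C) (S T : Set P) :
    lineJoin C S T = lineJoin C T S := by
  rw [lineJoin, lineJoin, Set.union_comm S T, h.thirdPoints_comm S T]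

theorem not_ic_of_collinear (h : IsPPIP P le ic C) {p q r x : P} (hC : C p q r)
    (hp : ¬ ic x p) (hq : ¬ ic x q) : ¬ ic x r := by
  rcases h.cc2 p q r x hC with (hx | hx | hx) | hx
  · exact absurd hx.1 hp
  · exact absurd hx.1 hq
  · exact absurd hx.1 hp
  · exact hx.2.2

theorem isDownClosed_lineJoin (h : IsPPIP P le ic C) (hS : IsDownClosed le S)
    (hT : IsDownClosed le T) : IsDownClosed le (lineJoin C S T) := by
  rintro r' r hr ((hrS | hrT) | ⟨s, hs, t, ht, hC⟩)
  · exact subset_lineJoin_left (hS r' r hr hrS)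
  · exact subset_lineJoin_right (hT r' r hr hrT)
  · by_cases hrs : le r' s
    · exact subset_lineJoin_left (hS r' s hrs hs)
    by_cases hrt : le r' t
    · exact subset_lineJoin_right (hT r' t hrt ht)
    obtain ⟨s', t', hs', ht', hC'⟩ := h.regularity s t r r' hC hr hrs hrt
    exact thirdPoints_subset_lineJoin ⟨s', hS s' s hs' hs, t', hT t' t ht' ht, hC'⟩

theorem not_ic_of_mem_lineJoin (h : IsPPIP P le ic C) {x r : P}
    (hx : ∀ y ∈ S ∪ T, ¬ ic x y) (hr : r ∈ lineJoin C S T) : ¬ ic x r := by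
  rcases hr with hr | ⟨s, hs, t, ht, hC⟩
  · exact hx r hr
  · exact h.not_ic_of_collinear hC (hx s (.inl hs)) (hx t (.inr ht))

theorem isConsistent_lineJoin (h : IsPPIP P le ic C) (hST : IsConsistent ic (S ∪ T)) :
    IsConsistent ic (lineJoin C S T) := by
  intro p q hp hq
  refine h.not_ic_of_mem_lineJoin (fun y hy hpy => ?_) hq
  exact h.not_ic_of_mem_lineJoin (hST y · hy) hp (h.ic_symm p y hpy)

theorem isConsistent_triangle (h : IsPPIP P le ic C) (hB : IsConsistent ic B) {a b c p q : P}
    (ha : a ∈ B) (hb : b ∈ B) (hc : c ∈ B) (hp : p ∈ B) (hbcq : C b c q) :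
    IsConsistent ic {a, b, c, p, q} := by
  have hBB : IsConsistent ic (lineJoin C B B) :=
    h.isConsistent_lineJoin (by rwa [Set.union_self])
  have hq : q ∈ lineJoin C B B := thirdPoints_subset_lineJoin ⟨b, hb, c, hc, hbcq⟩
  have hsub : B ⊆ lineJoin C B B := subset_lineJoin_left
  refine hBB.mono ?_
  simp only [Set.insert_subset_iff, Set.singleton_subset_iff]
  exact ⟨hsub ha, hsub hb, hsub hc, hsub hp, hq⟩

theorem thirdPoints_lineJoin_subset (h : IsPPIP P le ic C) (hS : IsDownClosed le S)
    (hT : IsDownClosed le T) (hST : IsConsistent ic (S ∪ T)) (hB : B ⊆ lineJoin C S T)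
    (hSB : thirdPoints C S B ⊆ B) (hTB : thirdPoints C T B ⊆ lineJoin C S T) :
    thirdPoints C B (lineJoin C S T) ⊆ lineJoin C S T := by
  rintro r ⟨b, hb, u, (huS | huT) | ⟨s, hs, t, ht, hstu⟩, hbur⟩
  · exact hB (hSB ⟨u, huS, b, hb, h.c_symm_left b u r hbur⟩)
  · exact hTB ⟨u, huT, b, hb, h.c_symm_left b u r hbur⟩
  · have hu : u ∈ lineJoin C S T := thirdPoints_subset_lineJoin ⟨s, hs, t, ht, hstu⟩
    have hcons : IsConsistent ic {s, b, u, t, r} :=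
      h.isConsistent_triangle (h.isConsistent_lineJoin hST) (subset_lineJoin_left hs) (hB hb) hu
        (subset_lineJoin_right ht) hbur
    rcases h.weak_triangle s b u t r (h.c_symm_right s t u hstu) hbur hcons with
      ⟨x, hsbx, htrx, -⟩ | ⟨s', hs', hbrs'⟩ | hbrt | ⟨s', t', hs', ht', hrst'⟩ | hrs | hrt
    · have hx : x ∈ B := hSB ⟨s, hs, b, hb, hsbx⟩
      exact hTB ⟨t, ht, x, hx, h.c_symm_right t r x htrx⟩
    · exact hB (hSB ⟨s', hS s' s hs' hs, b, hb, h.c_rotate hbrs'⟩)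
    · exact hTB ⟨t, ht, b, hb, h.c_rotate hbrt⟩
    · exact thirdPoints_subset_lineJoin
        ⟨s', hS s' s hs' hs, t', hT t' t ht' ht, h.c_rotate (h.c_rotate hrst')⟩
    · exact subset_lineJoin_left (hS r s hrs hs)
    · exact subset_lineJoin_right (hT r t hrt ht)

theorem thirdPoints_left_lineJoin_subset (h : IsPPIP P le ic C) (hS : IsDownClosed le S)
    (hT : IsDownClosed le T) (hST : IsConsistent ic (S ∪ T)) (hSS : thirdPoints C S S ⊆ S) :
    thirdPoints C S (lineJoin C S T) ⊆ lineJoin C S T := by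
  refine h.thirdPoints_lineJoin_subset hS hT hST subset_lineJoin_left hSS ?_
  rw [h.thirdPoints_comm T S]
  exact thirdPoints_subset_lineJoin

theorem isCSub_lineJoin (h : IsPPIP P le ic C) (hS : IsCSub le ic C S) (hT : IsCSub le ic C T)
    (hST : IsConsistent ic (S ∪ T)) : IsCSub le ic C (lineJoin C S T) := by
  obtain ⟨hSle, -, hSS⟩ := isCSub_iff.1 hS
  obtain ⟨hTle, -, hTT⟩ := isCSub_iff.1 hT
  have hSJ : thirdPoints C S (lineJoin C S T) ⊆ lineJoin C S T :=
    h.thirdPoints_left_lineJoin_subset hSle hTle hST hSS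
  have hTJ : thirdPoints C T (lineJoin C S T) ⊆ lineJoin C S T := by
    rw [h.lineJoin_comm S T]
    exact h.thirdPoints_left_lineJoin_subset hTle hSle (by rwa [Set.union_comm]) hTT
  exact isCSub_iff.2 ⟨h.isDownClosed_lineJoin hSle hTle, h.isConsistent_lineJoin hST,
    h.thirdPoints_lineJoin_subset hSle hTle hST subset_rfl hSJ hTJ⟩

end IsPPIP

theorem stmt5_general {P : Type*} {le ic : P → P → Prop} {C : P → P → P → Prop}
    (h : IsPPIP P le ic C) {S T : Set P} (hS : IsCSub le ic C S) (hT : IsCSub le ic C T)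
    (hST : IsConsistent ic (S ∪ T)) :
    ∃ hU : IsCSub le ic C (lineJoin C S T),
      IsLUB {(⟨S, hS⟩ : {X : Set P // IsCSub le ic C X}), ⟨T, hT⟩} ⟨lineJoin C S T, hU⟩ := by
  refine ⟨h.isCSub_lineJoin hS hT hST, ?_, ?_⟩
  · rintro X (rfl | rfl)
    · exact subset_lineJoin_left
    · exact subset_lineJoin_right
  · intro X hX
    have hSX : S ⊆ X.1 := hX (.inl rfl)
    have hTX : T ⊆ X.1 := hX (.inr rfl)
    exact lineJoin_subset hSX hTX (isCSub_iff.1 X.2).2.2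

/-- If `S, T` are consistent subspaces of a PPIP and `S ∪ T` is consistent, then the
join `S ∨ T` exists in `Csub(P)` and equals
`S ∪ T ∪ {r : ∃ p ∈ S, q ∈ T with C(p,q,r)}`. -/
theorem stmt5 (P : Type*) [Fintype P] (le ic : P → P → Prop) (C : P → P → P → Prop)
    (h : IsPPIP P le ic C) (S T : Set P)
    (hS : IsCSub le ic C S) (hT : IsCSub le ic C T)
    (hcons : ∀ p q, p ∈ S ∪ T → q ∈ S ∪ T → ¬ ic p q) :
    ∃ hU : IsCSub le ic C (S ∪ T ∪ {r | ∃ p ∈ S, ∃ q ∈ T, C p q r}),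
      IsLUB {(⟨S, hS⟩ : {X : Set P // IsCSub le ic C X}), ⟨T, hT⟩}
        (⟨S ∪ T ∪ {r | ∃ p ∈ S, ∃ q ∈ T, C p q r}, hU⟩ :
          {X : Set P // IsCSub le ic C X}) :=
  stmt5_general h hS hT hcons
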